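/- arXiv:2505.04951 — 2 statements merged into one kernel-verified Lean document; each statement's English description precedes it below -/
import Mathlib

section
/- For every integer n ≥ 3, the relative averaged prime gap satisfies ḡ_n / p̄_n > 1/(n·(1 + e^{−1})), where e is Euler's number. -/
open Finset Real

/-- `nthPrime n` is the n-th prime number with 1-based indexing:
`nthPrime 1 = 2`, `nthPrime 2 = 3`, `nthPrime 3 = 5`, ... -/
noncomputable def nthPrime (n : ℕ) : ℕ := Nat.nth Nat.Prime (n - 1)

/-- The arithmetic average of the first `n` primes. -/
noncomputable def avgPrime (n : ℕ) : ℝ := (1 / (n : ℝ)) * ∑ i ∈ Finset.Icc 1 n, (nthPrime i : ℝ)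

/-- The gap in the averaged primes. -/
noncomputable def avgGap (n : ℕ) : ℝ := avgPrime (n + 1) - avgPrime n

/-- The averaged-prime counting function `π̄(x) = #{i ≥ 1 : p̄_i ≤ x}`. -/
noncomputable def avgPrimeCount (x : ℝ) : ℕ := Nat.card {i : ℕ | 1 ≤ i ∧ avgPrime i ≤ x}

/-- The ordinary prime counting function for a real argument. -/
noncomputable def primeCount (x : ℝ) : ℕ := Nat.card {q : ℕ | q.Prime ∧ (q : ℝ) ≤ x}

/-!
Let `x` be the prime number `p (n + 1)`, let `S` be the sum of the `n` primes below `x`, and put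
`D = n * x - S = ∑ p < x, (x - p) = ∑ m < x, π(m)`. The relative gap is `D / ((n + 1) * S)`, so the
claim is `D * (n * (2 + e⁻¹) + 1) > n * (n + 1) * x`, which holds for large `n` once `D ≥ c * n * x`
for a constant `c > 1 / (2 + e⁻¹) = 0.4223…`.

As `x - p` decreases and `log p` increases in `p`, Chebyshev's sum inequality gives
`n * ∑ m < x, θ(m) ≤ D * θ(x)`. For `m ≤ x` and `x ≥ 100000` Chebyshev's bounds `θ(x) ≤ 1.08 x` and
`θ(m) ≥ 0.92129 m - 0.00437 x`, obtained from the integers `m! (m/30)! / ((m/2)! (m/3)! (m/5)!)`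
and Stirling's formula, allow `c = 0.4224`. The primes `7 ≤ x < 100000` are checked by computation.
-/

open Chebyshev
open scoped Nat ArithmeticFunction.vonMangoldt

/-! ### Sums over primes -/

theorem sum_range_sum_primesLE {R : Type*} [CommRing R] (f : ℕ → R) (x : ℕ) :
    ∑ m ∈ range x, ∑ p ∈ m.primesLE, f p = ∑ p ∈ x.primesBelow, ((x : R) - p) * f p := by
  induction x with
  | zero => simp
  | succ x ih =>
    have shift : ∑ p ∈ (x + 1).primesBelow, ((x + 1 : ℕ) - (p : R)) * f p =
        ∑ p ∈ (x + 1).primesBelow, ((x : R) - p) * f p + ∑ p ∈ x.primesLE, f p := by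
      rw [Nat.primesLE, ← sum_add_distrib]
      refine sum_congr rfl fun p _ => ?_
      push_cast
      ring
    rw [sum_range_succ, ih, shift, Nat.primesBelow_succ]
    split_ifs
    · rw [sum_insert x.notMem_primesBelow, sub_self, zero_mul, zero_add]
    · rfl

theorem sum_range_primeCounting {R : Type*} [CommRing R] (x : ℕ) :
    ∑ m ∈ range x, (m.primeCounting : R) = ∑ p ∈ x.primesBelow, ((x : R) - p) := by
  simpa [Nat.primesLE_card_eq_primeCounting] using sum_range_sum_primesLE (fun _ => (1 : R)) x

theorem sum_range_theta (x : ℕ) :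
    ∑ m ∈ range x, θ m = ∑ p ∈ x.primesBelow, ((x : ℝ) - p) * log p := by
  rw [← sum_range_sum_primesLE fun p : ℕ => log (p : ℝ)]
  exact sum_congr rfl fun m _ => by rw [theta_eq_sum_primesLE_log]

theorem antivaryOn_sub_log_primesBelow (x : ℕ) :
    AntivaryOn (fun p : ℕ => (x : ℝ) - p) (fun p : ℕ => log (p : ℝ)) x.primesBelow := by
  intro p hp q hq hlog
  have hp0 : (0 : ℝ) < p := mod_cast (Nat.prime_of_mem_primesBelow hp).pos
  have hq0 : (0 : ℝ) < q := mod_cast (Nat.prime_of_mem_primesBelow hq).pos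
  exact sub_le_sub_left ((log_lt_log_iff hp0 hq0).mp hlog).le _

theorem primeCounting'_mul_sum_theta_le (x : ℕ) :
    (x.primeCounting' : ℝ) * ∑ m ∈ range x, θ m ≤
      (∑ m ∈ range x, (m.primeCounting : ℝ)) * θ x := by
  have sum_log_le : ∑ p ∈ x.primesBelow, log (p : ℝ) ≤ θ x := by
    rw [theta_eq_sum_primesLE_log]
    exact sum_le_sum_of_subset_of_nonneg (Nat.primesBelow_mono x.le_succ)
      fun p _ _ => log_natCast_nonneg p
  calc (x.primeCounting' : ℝ) * ∑ m ∈ range x, θ m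
      = #x.primesBelow * ∑ p ∈ x.primesBelow, ((x : ℝ) - p) * log p := by
        rw [sum_range_theta, Nat.primesBelow_card_eq_primeCounting']
    _ ≤ (∑ p ∈ x.primesBelow, ((x : ℝ) - p)) * ∑ p ∈ x.primesBelow, log (p : ℝ) :=
        (antivaryOn_sub_log_primesBelow x).card_mul_sum_le_sum_mul_sum
    _ = (∑ m ∈ range x, (m.primeCounting : ℝ)) * ∑ p ∈ x.primesBelow, log (p : ℝ) := by
        rw [sum_range_primeCounting]
    _ ≤ _ := by gcongr

/-! ### Chebyshev's factorial ratio -/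

theorem log_factorial_eq_sum (m : ℕ) : log (m ! : ℝ) = ∑ d ∈ Ioc 0 m, Λ d * (m / d : ℕ) := by
  rw [← ArithmeticFunction.sum_Ioc_mul_zeta_eq_sum, ArithmeticFunction.vonMangoldt_mul_zeta,
    ← Ico_add_one_add_one_eq_Ioc, zero_add, ← prod_Ico_id_eq_factorial, Nat.cast_prod,
    log_prod fun d hd => Nat.cast_ne_zero.mpr (Nat.one_le_iff_ne_zero.mp (mem_Ico.mp hd).1)]
  rfl

theorem log_factorial_div_eq_sum (m k : ℕ) :
    log ((m / k)! : ℝ) = ∑ d ∈ Ioc 0 m, Λ d * (m / d / k : ℕ) := by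
  simp only [log_factorial_eq_sum, Nat.div_right_comm m _ k]
  refine sum_subset (Ioc_subset_Ioc_right (m.div_le_self k)) fun d hdm hd => ?_
  have hlt : m / k < d := by simp only [mem_Ioc] at hdm hd; lia
  rw [Nat.div_eq_of_lt hlt, Nat.cast_zero, mul_zero]

theorem psi_div_eq_sum (m : ℕ) {k : ℕ} (hk : 0 < k) :
    ψ (m / k : ℕ) = ∑ d ∈ Ioc 0 m, Λ d * (if k ≤ m / d then 1 else 0) := by
  have filter_eq : Ioc 0 (m / k) = {d ∈ Ioc 0 m | k ≤ m / d} := by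
    ext d
    simp only [mem_filter, mem_Ioc, and_assoc]
    refine and_congr_right fun hd => ?_
    rw [Nat.le_div_iff_mul_le hk, Nat.le_div_iff_mul_le hd, mul_comm k d]
    exact ⟨fun h => ⟨(Nat.le_mul_of_pos_right d hk).trans h, h⟩, And.right⟩
  simp only [psi, Nat.floor_natCast, filter_eq, sum_filter, mul_ite, mul_one, mul_zero]

/-- The logarithm of Chebyshev's integer `m! ⌊m/30⌋! / (⌊m/2⌋! ⌊m/3⌋! ⌊m/5⌋!)`, which approximates
`ψ m` from below. -/
noncomputable def chebyshevLogRatio (m : ℕ) : ℝ :=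
  log (m ! : ℝ) - log ((m / 2)! : ℝ) - log ((m / 3)! : ℝ) - log ((m / 5)! : ℝ) +
    log ((m / 30)! : ℝ)

theorem chebyshevLogRatio_eq_sum (m : ℕ) :
    chebyshevLogRatio m = ∑ d ∈ Ioc 0 m, Λ d * (((m / d : ℕ) : ℝ) - (m / d / 2 : ℕ) -
      (m / d / 3 : ℕ) - (m / d / 5 : ℕ) + (m / d / 30 : ℕ)) := by
  simp only [chebyshevLogRatio, log_factorial_eq_sum m, log_factorial_div_eq_sum m, mul_add,
    mul_sub, sum_add_distrib, sum_sub_distrib]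

theorem chebyshevLogRatio_le_psi (m : ℕ) : chebyshevLogRatio m ≤ ψ m := by
  rw [← Nat.div_one m, psi_div_eq_sum m one_pos, Nat.div_one, chebyshevLogRatio_eq_sum]
  refine sum_le_sum fun d _ => mul_le_mul_of_nonneg_left ?_ ArithmeticFunction.vonMangoldt_nonneg
  generalize m / d = q
  -- The combination of floors has period 30 in `q` and takes only the values 0 and 1.
  have hq : q + q / 30 ≤ (if 1 ≤ q then 1 else 0) + q / 2 + q / 3 + q / 5 := by
    split_ifs <;> lia
  have hq' : (q : ℝ) + (q / 30 : ℕ) ≤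
      (if 1 ≤ q then 1 else 0) + (q / 2 : ℕ) + (q / 3 : ℕ) + (q / 5 : ℕ) := mod_cast hq
  linarith

theorem psi_le_chebyshevLogRatio_add (m : ℕ) :
    ψ m ≤ chebyshevLogRatio m + ψ (m / 6 : ℕ) - ψ (m / 7 : ℕ) + ψ (m / 10 : ℕ) := by
  nth_rw 1 [← Nat.div_one m]
  rw [psi_div_eq_sum m one_pos, chebyshevLogRatio_eq_sum, psi_div_eq_sum m (k := 6) (by simp),
    psi_div_eq_sum m (k := 7) (by simp), psi_div_eq_sum m (k := 10) (by simp),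
    ← sum_add_distrib, ← sum_sub_distrib, ← sum_add_distrib]
  simp only [← mul_add, ← mul_sub]
  refine sum_le_sum fun d _ => mul_le_mul_of_nonneg_left ?_ ArithmeticFunction.vonMangoldt_nonneg
  generalize m / d = q
  have hq : (if 1 ≤ q then 1 else 0) + (if 7 ≤ q then 1 else 0) + q / 2 + q / 3 + q / 5 ≤
      q + q / 30 + (if 6 ≤ q then 1 else 0) + (if 10 ≤ q then 1 else 0) := by
    split_ifs <;> lia
  have hq' : ((if 1 ≤ q then 1 else 0) + (if 7 ≤ q then 1 else 0) +
      (q / 2 : ℕ) + (q / 3 : ℕ) + (q / 5 : ℕ) : ℝ) ≤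
      q + (q / 30 : ℕ) + (if 6 ≤ q then 1 else 0) + (if 10 ≤ q then 1 else 0) := mod_cast hq
  linarith

/-! ### Stirling bounds -/

-- The graph of `t * log t - t` lies above its tangent at `x`.
theorem mul_log_sub_add_mul_log_le {x y : ℝ} (hx : 0 < x) (hy : 0 < y) :
    x * log x - x + (y - x) * log x ≤ y * log y - y := by
  have h : y * (1 - x / y) ≤ y * (log y - log x) := by
    refine mul_le_mul_of_nonneg_left ?_ hy.le
    simpa only [log_div hy.ne' hx.ne', inv_div] using one_sub_inv_le_log_of_pos (div_pos hy hx)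
  rw [mul_sub, mul_div_cancel₀ _ hy.ne'] at h
  linarith

theorem log_factorial_le {n : ℕ} (hn : n ≠ 0) :
    log (n ! : ℝ) ≤ n * log n - n + log n / 2 + 1 := by
  obtain ⟨k, rfl⟩ := Nat.exists_eq_succ_of_ne_zero hn
  have h : log (Stirling.stirlingSeq (k + 1)) ≤ log (Stirling.stirlingSeq 1) :=
    Stirling.log_stirlingSeq'_antitone k.zero_le
  rw [Stirling.log_stirlingSeq_formula, Stirling.stirlingSeq_one,
    log_div (exp_pos 1).ne' (by positivity), log_sqrt zero_le_two, log_exp,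
    log_mul two_ne_zero (by positivity), log_div (by positivity) (exp_pos 1).ne', log_exp] at h
  rw [Nat.succ_eq_add_one]
  linarith

theorem log_factorial_floor_le {y : ℝ} (hy : 1 ≤ y) :
    log (⌊y⌋₊! : ℝ) ≤ y * log y - y + log y / 2 + 1 := by
  have hn : ⌊y⌋₊ ≠ 0 := (Nat.floor_pos.mpr hy).ne'
  have hn1 : (1 : ℝ) ≤ ⌊y⌋₊ := mod_cast Nat.one_le_iff_ne_zero.mpr hn
  have hny : (⌊y⌋₊ : ℝ) ≤ y := Nat.floor_le (by linarith)
  have hlog : log ⌊y⌋₊ ≤ log y := log_le_log (by linarith) hny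
  have tangent := mul_log_sub_add_mul_log_le (x := ⌊y⌋₊) (y := y) (by linarith) (by linarith)
  have := mul_nonneg (sub_nonneg.mpr hny) (log_nonneg hn1)
  linarith [log_factorial_le hn]

theorem le_log_factorial_floor {y : ℝ} (hy : 2 ≤ y) :
    y * log y - y - log y / 2 + 0.89 ≤ log (⌊y⌋₊! : ℝ) := by
  have hyz : y < (⌊y⌋₊ : ℝ) + 1 := Nat.lt_floor_add_one y
  have stirling := Stirling.le_log_factorial_stirling (n := ⌊y⌋₊ + 1) (by simp)
  rw [Nat.factorial_succ, Nat.cast_mul,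
    log_mul (x := (⌊y⌋₊ + 1 : ℕ)) (by positivity) (by positivity)] at stirling
  push_cast at stirling
  have tangent :=
    mul_log_sub_add_mul_log_le (x := y) (y := (⌊y⌋₊ : ℝ) + 1) (by linarith) (by linarith)
  have log_two_pi : 1.78 ≤ log (2 * π) := by
    have h6 : log (2 * 3) ≤ log (2 * π) :=
      log_le_log (by norm_num) (by gcongr; exact pi_gt_three.le)
    rw [log_mul two_ne_zero three_ne_zero] at h6
    linarith [log_two_gt_d9, log_three_gt_d9]
  have log_diff : log ((⌊y⌋₊ : ℝ) + 1) - log y ≤ ((⌊y⌋₊ : ℝ) + 1 - y) / 2 :=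
    calc log ((⌊y⌋₊ : ℝ) + 1) - log y = log (((⌊y⌋₊ : ℝ) + 1) / y) :=
          (log_div (by linarith) (by linarith)).symm
      _ ≤ ((⌊y⌋₊ : ℝ) + 1) / y - 1 := log_le_sub_one_of_pos (by positivity)
      _ = ((⌊y⌋₊ : ℝ) + 1 - y) / y := by field_simp
      _ ≤ ((⌊y⌋₊ : ℝ) + 1 - y) / 2 := by gcongr
  have log_y : 1 / 4 ≤ log y := by linarith [log_two_gt_d9, log_le_log zero_lt_two hy]
  have := mul_le_mul_of_nonneg_left log_y (sub_nonneg.mpr hyz.le)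
  linarith

/-- The constant `A = 0.92129…` of Chebyshev's estimates: `chebyshevLogRatio m = A m + O(log m)`. -/
noncomputable def chebyshevConst : ℝ := log 2 / 2 + log 3 / 3 + log 5 / 5 - log 30 / 30

theorem log_thirty : log 30 = log 2 + log 3 + log 5 := by
  rw [← log_mul two_ne_zero three_ne_zero, ← log_mul (by norm_num) (by norm_num)]
  norm_num

theorem chebyshevConst_gt : 0.92129 < chebyshevConst := by
  rw [chebyshevConst, log_thirty]
  linarith [log_two_gt_d9, log_three_gt_d9, log_five_gt_d9]

theorem chebyshevConst_lt : chebyshevConst < 0.921293 := by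
  rw [chebyshevConst, log_thirty]
  linarith [log_two_lt_d9, log_three_lt_d9, log_five_lt_d9]

theorem chebyshevLogRatio_floor (y : ℝ) :
    chebyshevLogRatio ⌊y⌋₊ = log (⌊y⌋₊! : ℝ) - log (⌊y / 2⌋₊! : ℝ) - log (⌊y / 3⌋₊! : ℝ) -
      log (⌊y / 5⌋₊! : ℝ) + log (⌊y / 30⌋₊! : ℝ) := by
  simp only [chebyshevLogRatio, Nat.floor_div_ofNat]

theorem chebyshevLogRatio_floor_le {y : ℝ} (hy : 60 ≤ y) :
    chebyshevLogRatio ⌊y⌋₊ ≤ chebyshevConst * y + 5 / 2 * log y - 4 := by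
  have h1 := log_factorial_floor_le (y := y) (by linarith)
  have h2 := le_log_factorial_floor (y := y / 2) (by linarith)
  have h3 := le_log_factorial_floor (y := y / 3) (by linarith)
  have h5 := le_log_factorial_floor (y := y / 5) (by linarith)
  have h30 := log_factorial_floor_le (y := y / 30) (by linarith)
  simp only [log_div (by linarith : y ≠ 0) (OfNat.ofNat_ne_zero _)] at h2 h3 h5 h30
  rw [chebyshevLogRatio_floor, chebyshevConst]
  linarith [log_thirty, log_two_gt_d9, log_three_gt_d9, log_five_gt_d9]

theorem le_chebyshevLogRatio_floor {y : ℝ} (hy : 60 ≤ y) :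
    chebyshevConst * y - 5 / 2 * log y + 2 ≤ chebyshevLogRatio ⌊y⌋₊ := by
  have h1 := le_log_factorial_floor (y := y) (by linarith)
  have h2 := log_factorial_floor_le (y := y / 2) (by linarith)
  have h3 := log_factorial_floor_le (y := y / 3) (by linarith)
  have h5 := log_factorial_floor_le (y := y / 5) (by linarith)
  have h30 := le_log_factorial_floor (y := y / 30) (by linarith)
  simp only [log_div (by linarith : y ≠ 0) (OfNat.ofNat_ne_zero _)] at h2 h3 h5 h30
  rw [chebyshevLogRatio_floor, chebyshevConst]
  linarith [log_thirty, log_two_gt_d9, log_three_gt_d9, log_five_gt_d9]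

/-! ### The upper bound for `ψ` -/

theorem lcmUpto_succ (m : ℕ) : Nat.lcmUpto (m + 1) = (Nat.lcmUpto m).lcm (m + 1) := by
  rw [Nat.lcmUpto, ← insert_Icc_right_eq_Icc_add_one (by lia), lcm_insert, lcm_comm]
  rfl

/-- Given `L = Nat.lcmUpto m`, decides whether `Nat.lcmUpto j ≤ bound j` for `m ≤ j < m + k`. It is
built from Boolean operations so that the kernel evaluates it quickly. -/
def lcmUptoLeCheck (bound : ℕ → ℕ) : (k m L : ℕ) → Bool
  | 0, _, _ => true
  | k + 1, m, L => Nat.ble L (bound m) && lcmUptoLeCheck bound k (m + 1) (L.lcm (m + 1))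

theorem lcmUpto_le_of_check {bound : ℕ → ℕ} {k m j : ℕ}
    (check : lcmUptoLeCheck bound k m (Nat.lcmUpto m) = true) (hmj : m ≤ j) (hjk : j < m + k) :
    Nat.lcmUpto j ≤ bound j := by
  induction k generalizing m with
  | zero => lia
  | succ k ih =>
    rw [lcmUptoLeCheck, Bool.and_eq_true, ← lcmUpto_succ] at check
    obtain rfl | hlt := hmj.eq_or_lt
    · exact Nat.le_of_ble_eq_true check.1
    · exact ih check.2 hlt (by lia)

-- The constant comes from `1.558 * log 2 < 1.08`.
theorem lcmUpto_le_two_pow {m : ℕ} (hm : m < 20000) :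
    Nat.lcmUpto m ≤ 2 ^ (1558 * m / 1000) := by
  have check : lcmUptoLeCheck (fun j => 2 ^ (1558 * j / 1000)) 20000 0 1 = true := by
    decide +kernel
  exact lcmUpto_le_of_check (m := 0) (by simpa [Nat.lcmUpto] using check) m.zero_le (by lia)

theorem psi_natCast_le_of_lt_20000 {m : ℕ} (hm : m < 20000) : ψ m ≤ 1.08 * m := by
  have hpos : (0 : ℝ) < Nat.lcmUpto m := mod_cast Nat.lcmUpto_pos m
  have hdiv : ((1558 * m / 1000 : ℕ) : ℝ) ≤ 1.558 * m := by
    refine Nat.cast_div_le.trans ?_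
    push_cast
    linarith
  calc ψ m = log (Nat.lcmUpto m) := psi_eq_log_lcmUpto m
    _ ≤ log (2 ^ (1558 * m / 1000)) := log_le_log hpos (mod_cast lcmUpto_le_two_pow hm)
    _ = (1558 * m / 1000 : ℕ) * log 2 := log_pow _ _
    _ ≤ 1.558 * m * 0.6931471808 := by gcongr; exact log_two_lt_d9.le
    _ ≤ 1.08 * m := by linarith [m.cast_nonneg (α := ℝ)]

theorem log_le_div_add_log_sub_one {a x : ℝ} (ha : 0 < a) (hx : 0 < x) :
    log x ≤ x / a + log a - 1 := by
  have h := log_le_sub_one_of_pos (div_pos hx ha)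
  rw [log_div hx.ne' ha.ne'] at h
  linarith

theorem log_le_div_20000_add {x : ℝ} (hx : 0 < x) : log x ≤ x / 20000 + 8.91 := by
  have log_20000 : log 20000 = 5 * log 2 + 4 * log 5 := by
    rw [show (20000 : ℝ) = 2 ^ 5 * 5 ^ 4 by norm_num, log_mul (by norm_num) (by norm_num),
      log_pow, log_pow]
    norm_num
  linarith [log_le_div_add_log_sub_one (a := 20000) (by norm_num) hx, log_two_lt_d9,
    log_five_lt_d9]

theorem psi_natCast_le (m : ℕ) : ψ m ≤ 1.08 * m := by
  induction m using Nat.strong_induction_on with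
  | _ m ih =>
    rcases lt_or_ge m 20000 with hm | hm
    · exact psi_natCast_le_of_lt_20000 hm
    have hm' : (20000 : ℝ) ≤ m := mod_cast hm
    have upper : chebyshevLogRatio m ≤ chebyshevConst * m + 5 / 2 * log m - 4 := by
      simpa using chebyshevLogRatio_floor_le (y := m) (by linarith)
    have lower : chebyshevConst * (m / 7) - 5 / 2 * log (m / 7) + 2 ≤ ψ (m / 7 : ℕ) := by
      refine (le_chebyshevLogRatio_floor (y := m / 7) (by linarith)).trans ?_
      rw [Nat.floor_div_ofNat, Nat.floor_natCast]
      exact chebyshevLogRatio_le_psi (m / 7)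
    have psi_div_six : ψ (m / 6 : ℕ) ≤ 1.08 * (m / 6) :=
      (ih (m / 6) (by lia)).trans (by gcongr; exact Nat.cast_div_le)
    have psi_div_ten : ψ (m / 10 : ℕ) ≤ 1.08 * (m / 10) :=
      (ih (m / 10) (by lia)).trans (by gcongr; exact Nat.cast_div_le)
    have log_div_seven : log (m / 7 : ℝ) ≤ log m := log_le_log (by linarith) (by linarith)
    have const_mul : chebyshevConst * m ≤ 0.921293 * m := by gcongr; exact chebyshevConst_lt.le
    linarith [psi_le_chebyshevLogRatio_add m, log_le_div_20000_add (x := m) (by linarith)]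

theorem psi_le_mul {x : ℝ} (hx : 0 ≤ x) : ψ x ≤ 1.08 * x := by
  rw [psi_eq_psi_coe_floor]
  exact (psi_natCast_le _).trans (by gcongr; exact Nat.floor_le hx)

/-! ### The lower bound for `θ` -/

theorem pow_mul_psi_rpow_inv_le {t x : ℝ} {k : ℕ} (ht : 0 ≤ t) (htx : t ^ (k + 1) ≤ x) :
    t ^ k * ψ (x ^ (((k + 1 : ℕ) : ℝ)⁻¹)) ≤ 1.08 * x := by
  have hx : 0 ≤ x := (pow_nonneg ht _).trans htx
  have root_pow : (x ^ (((k + 1 : ℕ) : ℝ)⁻¹)) ^ (k + 1) = x :=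
    rpow_inv_natCast_pow hx k.succ_ne_zero
  have root_nonneg : 0 ≤ x ^ (((k + 1 : ℕ) : ℝ)⁻¹) := by positivity
  have le_root : t ≤ x ^ (((k + 1 : ℕ) : ℝ)⁻¹) :=
    le_of_pow_le_pow_left₀ k.succ_ne_zero root_nonneg (by rwa [root_pow])
  calc t ^ k * ψ (x ^ (((k + 1 : ℕ) : ℝ)⁻¹))
      ≤ (x ^ (((k + 1 : ℕ) : ℝ)⁻¹)) ^ k * (1.08 * x ^ (((k + 1 : ℕ) : ℝ)⁻¹)) := by
        gcongr
        exact psi_le_mul root_nonneg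
    _ = 1.08 * (x ^ (((k + 1 : ℕ) : ℝ)⁻¹)) ^ (k + 1) := by ring
    _ = 1.08 * x := by rw [root_pow]

theorem psi_sub_theta_le_mul {x : ℝ} (hx : 100000 ≤ x) : ψ x - θ x ≤ 0.004037 * x := by
  have sqrt_le : 316 * ψ (x ^ (2⁻¹ : ℝ)) ≤ 1.08 * x := by
    simpa using pow_mul_psi_rpow_inv_le (t := 316) (k := 1) (by simp) (by norm_num; linarith)
  have cbrt_le : 46 ^ 2 * ψ (x ^ (3⁻¹ : ℝ)) ≤ 1.08 * x := by
    simpa using pow_mul_psi_rpow_inv_le (t := 46) (k := 2) (by simp) (by norm_num; linarith)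
  have fifth_root_le : 10 ^ 4 * ψ (x ^ (5⁻¹ : ℝ)) ≤ 1.08 * x := by
    simpa using pow_mul_psi_rpow_inv_le (t := 10) (k := 4) (by simp) (by norm_num; linarith)
  linarith [psi_sub_theta_le_psi_add_psi_add_psi x]

theorem psi_sub_theta_mono : Monotone fun x => ψ x - θ x := by
  intro x y hxy
  simp only [psi_sub_theta_eq_sum_not_prime]
  gcongr

theorem chebyshevConst_mul_sub_le_theta {m : ℕ} {x : ℝ} (hx : 100000 ≤ x) (hm : m ≤ x) :
    chebyshevConst * m - 0.00437 * x ≤ θ m := by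
  rcases lt_or_ge m 60 with hm60 | hm60
  · have hm60' : (m : ℝ) < 60 := mod_cast hm60
    have const_mul : chebyshevConst * m ≤ 0.921293 * m := by gcongr; exact chebyshevConst_lt.le
    linarith [theta_nonneg m]
  · have hm60' : (60 : ℝ) ≤ m := mod_cast hm60
    have psi_lower : chebyshevConst * m - 5 / 2 * log m + 2 ≤ ψ m := by
      refine (le_chebyshevLogRatio_floor hm60').trans ?_
      simpa using chebyshevLogRatio_le_psi m
    have psi_sub_theta : ψ m - θ m ≤ 0.004037 * x :=
      (psi_sub_theta_mono hm).trans (psi_sub_theta_le_mul hx)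
    linarith [log_le_div_20000_add (x := m) (by linarith)]

theorem le_sum_range_theta {x : ℕ} (hx : 100000 ≤ x) :
    0.4562 * (x : ℝ) ^ 2 ≤ ∑ m ∈ range x, θ m := by
  have hx' : (100000 : ℝ) ≤ x := mod_cast hx
  have sum_id : ∑ m ∈ range x, (m : ℝ) = x * (x - 1) / 2 := by
    rw [← Nat.cast_sum, sum_range_id, ← Nat.choose_two_right, Nat.cast_choose_two]
  calc 0.4562 * (x : ℝ) ^ 2
      ≤ 0.92129 * (x * (x - 1) / 2) - x * (0.00437 * x) := by nlinarith
    _ ≤ chebyshevConst * (x * (x - 1) / 2) - x * (0.00437 * x) := by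
        have : (0 : ℝ) ≤ x * (x - 1) / 2 := by
          rw [← sum_id]
          positivity
        gcongr
        exact chebyshevConst_gt.le
    _ = ∑ m ∈ range x, (chebyshevConst * m - 0.00437 * x) := by
        rw [sum_sub_distrib, ← mul_sum, sum_id, sum_const, card_range, nsmul_eq_mul]
    _ ≤ ∑ m ∈ range x, θ m :=
        sum_le_sum fun m hm =>
          chebyshevConst_mul_sub_le_theta hx' (mod_cast (mem_range.mp hm).le)

theorem mul_primeCounting'_le_sum_primeCounting {x : ℕ} (hx : 100000 ≤ x) :
    0.4224 * x.primeCounting' * x ≤ ∑ m ∈ range x, (m.primeCounting : ℝ) := by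
  have hx0 : (0 : ℝ) < x := mod_cast (by lia : 0 < x)
  have theta_le : θ x ≤ 1.08 * x := (theta_le_psi x).trans (psi_natCast_le x)
  have h : 0.4224 * x.primeCounting' * x * (1.08 * x) ≤
      (∑ m ∈ range x, (m.primeCounting : ℝ)) * (1.08 * x) :=
    calc 0.4224 * x.primeCounting' * x * (1.08 * x)
        ≤ x.primeCounting' * (0.4562 * (x : ℝ) ^ 2) := by
          have : (0 : ℝ) ≤ x.primeCounting' * (x : ℝ) ^ 2 := by positivity
          linarith
      _ ≤ x.primeCounting' * ∑ m ∈ range x, θ m := by gcongr; exact le_sum_range_theta hx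
      _ ≤ (∑ m ∈ range x, (m.primeCounting : ℝ)) * θ x := primeCounting'_mul_sum_theta_le x
      _ ≤ (∑ m ∈ range x, (m.primeCounting : ℝ)) * (1.08 * x) := by gcongr
  exact le_of_mul_le_mul_right h (mul_pos (by norm_num) hx0)

/-! ### Verification for primes below 100000 -/

theorem prime_iff_coprime_factorial {B x : ℕ} (hBx : B < x) (hx : x < (B + 1) ^ 2) :
    x.Prime ↔ x.Coprime B ! := by
  refine ⟨fun hp => hp.coprime_factorial_of_lt hBx, fun hcop => ?_⟩
  by_contra hp
  have one_lt : 1 < x := by nlinarith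
  have minFac_prime : x.minFac.Prime := Nat.minFac_prime one_lt.ne'
  have minFac_le : x.minFac < B + 1 :=
    lt_of_pow_lt_pow_left₀ 2 (by lia) ((Nat.minFac_sq_le_self (by lia) hp).trans_lt hx)
  exact Nat.not_coprime_of_dvd_of_dvd minFac_prime.one_lt x.minFac_dvd
    (minFac_prime.dvd_factorial.mpr (Nat.lt_succ_iff.mp minFac_le)) hcop

/-- With `n` the number of primes below `x` and `D` the sum of `x - p` over these primes, this is
the bound to be proved when `x` is the prime following the first `n` ones, with `2 + e⁻¹` replaced
by the smaller number `2.3678` and denominators cleared. -/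
def HasGapBound (x : ℕ) : Prop :=
  10000 * (x.primeCounting' * (x.primeCounting' + 1) * x) <
    (∑ m ∈ range x, m.primeCounting) * (23678 * x.primeCounting' + 10000)

/-- The invariant of the finite verification: `HasGapBound` holds for all primes `7 ≤ p < x`, and
`n`, `D` are the two quantities that enter `HasGapBound x`. -/
structure VerifiedBelow (x n D : ℕ) : Prop where
  primeCounting'_eq : x.primeCounting' = n
  sum_primeCounting_eq : ∑ m ∈ range x, m.primeCounting = D
  hasGapBound : ∀ p : ℕ, p.Prime → 7 ≤ p → p < x → HasGapBound p

/-- Advances `VerifiedBelow x n D` by `k` steps, returning the final `n` and `D`, or `none` if some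
prime violates `HasGapBound`; `P` has to detect primality by coprimality. It is built from Boolean
operations so that the kernel evaluates it quickly. -/
def gapScan (P : ℕ) : (k x n D : ℕ) → Option (ℕ × ℕ)
  | 0, _, n, D => some (n, D)
  | k + 1, x, n, D =>
    bif Nat.beq (x.gcd P) 1 then
      bif Nat.blt (10000 * (n * (n + 1) * x)) (D * (23678 * n + 10000)) then
        gapScan P k (x + 1) (n + 1) (D + (n + 1))
      else none
    else gapScan P k (x + 1) n (D + n)

namespace VerifiedBelow

variable {x n D : ℕ}

theorem succ_of_prime (h : VerifiedBelow x n D) (hp : x.Prime) (hx : HasGapBound x) :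
    VerifiedBelow (x + 1) (n + 1) (D + (n + 1)) := by
  have count : (x + 1).primeCounting' = n + 1 := by
    rw [Nat.primeCounting', Nat.count_succ, if_pos hp, ← Nat.primeCounting', h.primeCounting'_eq]
  refine ⟨count, ?_, fun p hp' h7 hlt => ?_⟩
  · rw [sum_range_succ, h.sum_primeCounting_eq, Nat.primeCounting, count]
  · obtain rfl | hlt := (Nat.lt_succ_iff.mp hlt).eq_or_lt
    exacts [hx, h.hasGapBound p hp' h7 hlt]

theorem succ_of_not_prime (h : VerifiedBelow x n D) (hp : ¬ x.Prime) :
    VerifiedBelow (x + 1) n (D + n) := by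
  have count : (x + 1).primeCounting' = n := by
    rw [Nat.primeCounting', Nat.count_succ, if_neg hp, ← Nat.primeCounting', h.primeCounting'_eq,
      add_zero]
  refine ⟨count, ?_, fun p hp' h7 hlt => ?_⟩
  · rw [sum_range_succ, h.sum_primeCounting_eq, Nat.primeCounting, count]
  · obtain rfl | hlt := (Nat.lt_succ_iff.mp hlt).eq_or_lt
    exacts [absurd hp' hp, h.hasGapBound p hp' h7 hlt]

theorem of_gapScan {B k n' D' : ℕ} (h : VerifiedBelow x n D) (hBx : B < x)
    (hx : x + k ≤ (B + 1) ^ 2) (scan : gapScan B ! k x n D = some (n', D')) :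
    VerifiedBelow (x + k) n' D' := by
  induction k generalizing x n D with
  | zero =>
    obtain ⟨rfl, rfl⟩ : n = n' ∧ D = D' := by simpa [gapScan] using scan
    exact h
  | succ k ih =>
    rw [add_comm k, ← add_assoc] at hx ⊢
    have prime_iff := prime_iff_coprime_factorial hBx (by lia)
    rw [gapScan] at scan
    cases is_prime : Nat.beq (x.gcd B !) 1 with
    | false =>
      rw [is_prime, cond_false] at scan
      have not_prime : ¬ x.Prime := fun hp =>
        Nat.ne_of_beq_eq_false is_prime (prime_iff.mp hp)
      exact ih (h.succ_of_not_prime not_prime) (by lia) hx scan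
    | true =>
      rw [is_prime, cond_true] at scan
      have hp : x.Prime := prime_iff.mpr (Nat.eq_of_beq_eq_true is_prime)
      cases has_bound : Nat.blt (10000 * (n * (n + 1) * x)) (D * (23678 * n + 10000)) with
      | false => simp [has_bound] at scan
      | true =>
        rw [has_bound, cond_true] at scan
        have gap_bound : HasGapBound x := by
          rw [HasGapBound, h.primeCounting'_eq, h.sum_primeCounting_eq]
          exact Nat.le_of_ble_eq_true has_bound
        exact ih (h.succ_of_prime hp gap_bound) (by lia) hx scan

end VerifiedBelow

theorem verifiedBelow_seven : VerifiedBelow 7 3 11 :=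
  ⟨by decide +kernel, by decide +kernel, fun _ _ h7 hlt => absurd hlt h7.not_gt⟩

theorem verifiedBelow_100000 : VerifiedBelow 100000 9592 504803463 := by
  -- Kernel evaluation time grows faster than linearly in the number of steps, hence the stages.
  have to_36 : VerifiedBelow 36 11 236 := verifiedBelow_seven.of_gapScan (B := 5) (k := 29)
    (by simp) (by simp) (by decide +kernel)
  have to_1296 : VerifiedBelow 1296 210 147949 := to_36.of_gapScan (B := 35) (k := 1260)
    (by simp) (by simp) (by decide +kernel)
  have to_20000 : VerifiedBelow 20000 2262 24068809 := to_1296.of_gapScan (B := 316) (k := 18704)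
    (by simp) (by simp) (by decide +kernel)
  have to_40000 : VerifiedBelow 40000 4203 88949334 := to_20000.of_gapScan (B := 316) (k := 20000)
    (by simp) (by simp) (by decide +kernel)
  have to_60000 : VerifiedBelow 60000 6057 191571262 := to_40000.of_gapScan (B := 316) (k := 20000)
    (by simp) (by simp) (by decide +kernel)
  have to_80000 : VerifiedBelow 80000 7837 330471792 := to_60000.of_gapScan (B := 316) (k := 20000)
    (by simp) (by simp) (by decide +kernel)
  exact to_80000.of_gapScan (B := 316) (k := 20000)
    (by simp) (by simp) (by decide +kernel)

/-! ### Averaged primes -/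

theorem hasGapBound_of_100000_le {x : ℕ} (hx : 100000 ≤ x) : HasGapBound x := by
  have many_primes : 9592 ≤ x.primeCounting' :=
    verifiedBelow_100000.primeCounting'_eq ▸ Nat.monotone_primeCounting' hx
  have many_primes' : (9592 : ℝ) ≤ x.primeCounting' := mod_cast many_primes
  have hx0 : (0 : ℝ) < x := mod_cast (by lia : 0 < x)
  have hn : (0 : ℝ) < x.primeCounting' := by linarith
  have key : (10000 * (x.primeCounting' * (x.primeCounting' + 1) * x) : ℝ) <
      (∑ m ∈ range x, (m.primeCounting : ℝ)) * (23678 * x.primeCounting' + 10000) :=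
    calc (10000 * (x.primeCounting' * (x.primeCounting' + 1) * x) : ℝ)
        = x.primeCounting' * x * (10000 * (x.primeCounting' + 1)) := by ring
      _ < x.primeCounting' * x * (0.4224 * (23678 * x.primeCounting' + 10000)) :=
          mul_lt_mul_of_pos_left (by linarith) (mul_pos hn hx0)
      _ = 0.4224 * x.primeCounting' * x * (23678 * x.primeCounting' + 10000) := by ring
      _ ≤ _ := by gcongr; exact mul_primeCounting'_le_sum_primeCounting hx
  exact mod_cast key

theorem hasGapBound_of_prime {p : ℕ} (hp : p.Prime) (h7 : 7 ≤ p) : HasGapBound p :=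
  (lt_or_ge p 100000).elim (verifiedBelow_100000.hasGapBound p hp h7) hasGapBound_of_100000_le

theorem sum_nthPrime (n : ℕ) :
    ∑ i ∈ Icc 1 n, nthPrime i = ∑ p ∈ (Nat.nth Nat.Prime n).primesBelow, p := by
  induction n with
  | zero => simp [Nat.nth_prime_zero_eq_two]
  | succ n ih =>
    rw [sum_Icc_succ_top (by lia), ih, Nat.primesBelow_eq_filter_range (Nat.nth _ (n + 1)),
      Nat.filter_range_nth_eq_insert_of_infinite Nat.infinite_setOfPred_prime,
      sum_insert (by simp), add_comm]
    rfl

theorem nth_prime_mul_sub_sum_nthPrime (n : ℕ) :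
    n * (Nat.nth Nat.Prime n : ℝ) - ∑ i ∈ Icc 1 n, (nthPrime i : ℝ) =
      ∑ m ∈ range (Nat.nth Nat.Prime n), (m.primeCounting : ℝ) := by
  rw [← Nat.cast_sum, sum_nthPrime, Nat.cast_sum, sum_range_primeCounting, sum_sub_distrib,
    sum_const, nsmul_eq_mul, Nat.primesBelow_card_eq_primeCounting', Nat.primeCounting'_nth_eq]

theorem seven_le_nth_prime {n : ℕ} (hn : 3 ≤ n) : 7 ≤ Nat.nth Nat.Prime n := by
  refine le_trans ?_ (Nat.nth_monotone Nat.infinite_setOfPred_prime hn)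
  have count_seven : Nat.count Nat.Prime 7 = 3 := verifiedBelow_seven.primeCounting'_eq
  rw [← count_seven, Nat.nth_count (by norm_num)]

theorem gap_bound_nth_prime {n : ℕ} (hn : 3 ≤ n) :
    10000 * (n * (n + 1) * Nat.nth Nat.Prime n) <
      (n * (Nat.nth Nat.Prime n : ℝ) - ∑ i ∈ Icc 1 n, (nthPrime i : ℝ)) *
        (23678 * n + 10000) := by
  have h := hasGapBound_of_prime (Nat.prime_nth_prime n) (seven_le_nth_prime hn)
  rw [HasGapBound, Nat.primeCounting'_nth_eq] at h
  rw [nth_prime_mul_sub_sum_nthPrime]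
  exact_mod_cast h

theorem avgGap_div_avgPrime {n : ℕ} (hn : n ≠ 0) :
    avgGap n / avgPrime n =
      (n * (Nat.nth Nat.Prime n : ℝ) - ∑ i ∈ Icc 1 n, (nthPrime i : ℝ)) /
        ((n + 1) * ∑ i ∈ Icc 1 n, (nthPrime i : ℝ)) := by
  have nthPrime_succ : nthPrime (n + 1) = Nat.nth Nat.Prime n := rfl
  rw [avgGap, avgPrime, avgPrime, sum_Icc_succ_top (by lia), nthPrime_succ]
  push_cast
  field_simp
  ring

theorem stmt8 (n : ℕ) (hn : 3 ≤ n) :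
    avgGap n / avgPrime n > 1 / ((n : ℝ) * (1 + Real.exp (-1))) := by
  rw [avgGap_div_avgPrime (by lia), gt_iff_lt]
  set x : ℝ := (Nat.nth Nat.Prime n : ℝ)
  set S := ∑ i ∈ Icc 1 n, (nthPrime i : ℝ)
  have bound : 10000 * (n * (n + 1) * x) < (n * x - S) * (23678 * n + 10000) :=
    gap_bound_nth_prime hn
  have S_pos : 0 < S := sum_pos (fun i _ => mod_cast (Nat.prime_nth_prime (i - 1)).pos)
    ⟨1, mem_Icc.mpr ⟨le_rfl, by lia⟩⟩
  have gap_pos : 0 < n * x - S := by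
    refine pos_of_mul_pos_left ((?_ : (0 : ℝ) ≤ _).trans_lt bound) ?_ <;> positivity
  have exp_bound : (n * x - S) * (n * 0.3678) ≤ (n * x - S) * (n * exp (-1)) := by
    gcongr
    linarith [exp_neg_one_gt_d9]
  rw [div_lt_div_iff₀ (by positivity) (by positivity)]
  linarith
end

section
/- For every integer n ≥ 1, the number of averaged primes between the squares of consecutive averaged primes satisfies π̄(p̄_{n+1}²) − π̄(p̄_n²) > ln n. -/
open Finset Real

/-!
Chebyshev's estimate `2 ^ m ≤ (m + 1) * lcm(1, …, m) ≤ (m + 1) * m ^ π(m)` shows that a prime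
`p_i ≤ 2 ^ e` is at most about `e * i`. Hence consecutive averaged primes, up to the point where
`p_i` exceeds `2 ^ e`, differ by at most `e`, and an interval `(x, x + k * e]` in that range
contains at least `k` of them. On the other hand all primes but the first are odd, which gives
`p̄_n ≥ n` and `p̄_{n+1} - p̄_n ≥ 1 - 1 / (n * (n + 1))`, and so `p̄_{n+1} ^ 2 - p̄_n ^ 2 ≥ 2 * n`.
Since `e` can be taken of order `log n` for `x = p̄_n ^ 2`, the interval between the squares is long
enough for `k > log n` averaged primes as soon as `n ≥ 68`. For `6 ≤ n < 68` the same count applies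
with the true values of `p̄_n` in place of the bound `2 * n`, and for `n < 6` the averaged primes
between the two squares are exhibited directly.
-/

open Nat (nth)

lemma lcmUpto_le_pow_primeCounting (n : ℕ) : Nat.lcmUpto n ≤ n ^ Nat.primeCounting n := by
  rcases eq_or_ne n 0 with rfl | hn
  · simp [Nat.lcmUpto]
  rw [Nat.lcmUpto_eq_prod_pow_log, ← Nat.primesLE_card_eq_primeCounting]
  exact Finset.prod_le_pow_card _ _ _ fun p _ ↦ Nat.pow_log_le_self p hn

lemma le_mul_primeCounting_add_one {e n : ℕ} (hn : n ≤ 2 ^ e) :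
    n ≤ e * (Nat.primeCounting n + 1) + 1 := by
  have hsucc : n + 1 ≤ 2 ^ (e + 1) := by
    have := Nat.one_le_two_pow (n := e)
    rw [pow_succ]
    omega
  refine (Nat.pow_le_pow_iff_right one_lt_two).mp ?_
  calc
    2 ^ n ≤ (n + 1) * Nat.lcmUpto n := Chebyshev.two_pow_le_mul_lcmUpto n
    _ ≤ (n + 1) * n ^ Nat.primeCounting n := by gcongr; exact lcmUpto_le_pow_primeCounting n
    _ ≤ 2 ^ (e + 1) * (2 ^ e) ^ Nat.primeCounting n := by gcongr
    _ = 2 ^ (e * (Nat.primeCounting n + 1) + 1) := by rw [← pow_mul, ← pow_add]; ring_nf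

lemma nth_prime_le_two_pow {e i : ℕ} (h : e * (i + 1) + 1 < 2 ^ e) :
    nth Nat.Prime i ≤ 2 ^ e := by
  have hcount : i < Nat.primeCounting (2 ^ e) := by
    by_contra! hle
    have := le_mul_primeCounting_add_one (le_refl (2 ^ e))
    have : e * (Nat.primeCounting (2 ^ e) + 1) ≤ e * (i + 1) := by gcongr
    omega
  exact Nat.lt_succ_iff.mp (Nat.nth_lt_of_lt_count hcount)

-- The crude bound `2 ^ e` provides the exponent from which the estimate bootstraps to a linear one.
lemma nth_prime_le_mul_add_one {e i : ℕ} (h : e * (i + 1) + 1 < 2 ^ e) :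
    nth Nat.Prime i ≤ e * (i + 2) + 1 := by
  have hcount : Nat.primeCounting (nth Nat.Prime i) = i + 1 :=
    Nat.count_nth_succ_of_infinite Nat.infinite_setOfPred_prime i
  simpa only [hcount] using le_mul_primeCounting_add_one (nth_prime_le_two_pow h)

lemma nth_prime_add_two_le (i : ℕ) : nth Nat.Prime (i + 1) + 2 ≤ nth Nat.Prime (i + 2) := by
  have hlt : nth Nat.Prime (i + 1) < nth Nat.Prime (i + 2) :=
    Nat.nth_strictMono Nat.infinite_setOfPred_prime (Nat.lt_succ_self (i + 1))
  have := Nat.add_two_le_nth_prime (i + 1)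
  have := (Nat.prime_nth_prime (i + 1)).eq_two_or_odd
  have := (Nat.prime_nth_prime (i + 2)).eq_two_or_odd
  omega

lemma two_mul_add_one_le_nth_prime : ∀ i : ℕ, 2 * i + 1 ≤ nth Nat.Prime i
  | 0 => by simp
  | 1 => by simp
  | i + 2 => by
    have := two_mul_add_one_le_nth_prime (i + 1)
    have := nth_prime_add_two_le i
    omega

-- `nth Nat.Prime` is indexed from `0`: the paper's `p_{n+1}` is `nth Nat.Prime n`.
lemma avgPrime_eq_sum_range_div (n : ℕ) :
    avgPrime n = (∑ i ∈ range n, (nth Nat.Prime i : ℝ)) / n := by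
  rw [avgPrime, one_div_mul_eq_div, Finset.range_eq_Ico,
    ← Finset.sum_Ico_add_right_sub_eq (c := 1), zero_add, Finset.Ico_add_one_right_eq_Icc]
  rfl

lemma avgPrime_zero : avgPrime 0 = 0 := by simp [avgPrime]

lemma add_one_mul_avgPrime_add_one (n : ℕ) :
    (n + 1 : ℝ) * avgPrime (n + 1) = n * avgPrime n + nth Nat.Prime n := by
  have hmul (m : ℕ) : (m : ℝ) * avgPrime m = ∑ i ∈ range m, (nth Nat.Prime i : ℝ) := by
    rcases eq_or_ne m 0 with rfl | hm
    · simp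
    · rw [avgPrime_eq_sum_range_div]; field_simp
  have := hmul (n + 1)
  rw [Finset.sum_range_succ, ← hmul n] at this
  exact_mod_cast this

lemma natCast_le_avgPrime (n : ℕ) : (n : ℝ) ≤ avgPrime n := by
  induction n with
  | zero => simp [avgPrime_zero]
  | succ n ih =>
    have hrec := add_one_mul_avgPrime_add_one n
    have hprime : (2 * n + 1 : ℝ) ≤ nth Nat.Prime n := mod_cast two_mul_add_one_le_nth_prime n
    have hmul : (n : ℝ) * n ≤ n * avgPrime n := by gcongr
    refine le_of_mul_le_mul_left ?_ (n.cast_add_one_pos (α := ℝ))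
    push_cast
    linarith

lemma mul_avgPrime_add_le (n : ℕ) :
    n * avgPrime n + n * (n + 1) ≤ n * nth Nat.Prime n + 1 := by
  induction n with
  | zero => simp
  | succ n ih =>
    rcases eq_or_ne n 0 with rfl | hn
    · norm_num [avgPrime_eq_sum_range_div]
    obtain ⟨m, rfl⟩ := Nat.exists_eq_succ_of_ne_zero hn
    have hrec := add_one_mul_avgPrime_add_one (m + 1)
    have hgap : (nth Nat.Prime (m + 1) + 2 : ℝ) ≤ nth Nat.Prime (m + 2) :=
      mod_cast nth_prime_add_two_le m
    push_cast at *
    nlinarith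

lemma avgPrime_lt_nth_prime (n : ℕ) : avgPrime n < nth Nat.Prime n := by
  rcases n.eq_zero_or_pos with rfl | hn
  · simp [avgPrime_zero]
  have hone : (1 : ℝ) ≤ n := mod_cast hn
  have := mul_avgPrime_add_le n
  refine lt_of_mul_lt_mul_left (a := (n : ℝ)) ?_ (by positivity)
  nlinarith

lemma avgPrime_strictMono : StrictMono avgPrime := by
  refine strictMono_nat_of_lt_succ fun n ↦ ?_
  have hrec := add_one_mul_avgPrime_add_one n
  have hlt := avgPrime_lt_nth_prime n
  refine lt_of_mul_lt_mul_left ?_ (n.cast_add_one_pos (α := ℝ)).le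
  linarith

lemma avgPrime_add_one_le {e i : ℕ} (hei : e < i) (h : e * (i + 1) + 1 < 2 ^ e) :
    avgPrime (i + 1) ≤ avgPrime i + e := by
  have hprime : (nth Nat.Prime i : ℝ) ≤ e * (i + 2) + 1 := mod_cast nth_prime_le_mul_add_one h
  have hrec := add_one_mul_avgPrime_add_one i
  have he : (e + 1 : ℝ) ≤ i := mod_cast hei
  have hi := natCast_le_avgPrime i
  refine le_of_mul_le_mul_left ?_ (i.cast_add_one_pos (α := ℝ))
  linarith

lemma sub_one_le_mul_avgPrime_sub (n : ℕ) :
    (n * (n + 1) - 1 : ℝ) ≤ n * (n + 1) * (avgPrime (n + 1) - avgPrime n) := by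
  linear_combination mul_avgPrime_add_le n - n * add_one_mul_avgPrime_add_one n

lemma two_mul_le_avgPrime_sq_sub {n : ℕ} (hn : 2 ≤ n) :
    (2 * n : ℝ) ≤ avgPrime (n + 1) ^ 2 - avgPrime n ^ 2 := by
  have htwo : (2 : ℝ) ≤ n := mod_cast hn
  have hpos : (0 : ℝ) < n * (n + 1) := by positivity
  have hgap := sub_one_le_mul_avgPrime_sub n
  have hsum : (2 * n + 1 : ℝ) ≤ avgPrime (n + 1) + avgPrime n := by
    have := natCast_le_avgPrime (n + 1)
    have := natCast_le_avgPrime n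
    push_cast at *
    linarith
  refine le_of_mul_le_mul_left ?_ hpos
  calc
    (n * (n + 1) * (2 * n) : ℝ) ≤ (2 * n + 1) * (n * (n + 1) - 1) := by nlinarith
    _ ≤ (avgPrime (n + 1) + avgPrime n) * (n * (n + 1) * (avgPrime (n + 1) - avgPrime n)) := by
      have : (0 : ℝ) ≤ n * (n + 1) - 1 := by nlinarith
      gcongr
      linarith
    _ = n * (n + 1) * (avgPrime (n + 1) ^ 2 - avgPrime n ^ 2) := by ring

lemma finite_setOf_avgPrime_le (x : ℝ) : {i : ℕ | 1 ≤ i ∧ avgPrime i ≤ x}.Finite :=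
  (Set.finite_Iic ⌊x⌋₊).subset fun i hi ↦ Nat.le_floor ((natCast_le_avgPrime i).trans hi.2)

lemma le_avgPrimeCount_iff {x : ℝ} (hx : 0 ≤ x) {m : ℕ} :
    m ≤ avgPrimeCount x ↔ avgPrime m ≤ x := by
  rw [avgPrimeCount, Nat.card_coe_set_eq]
  constructor
  · contrapose!
    intro hlt
    have hm : m ≠ 0 := by
      rintro rfl
      exact hlt.not_ge (avgPrime_zero.trans_le hx)
    have hsub : {i : ℕ | 1 ≤ i ∧ avgPrime i ≤ x} ⊆ Finset.Ico 1 m := fun i ⟨hi, hix⟩ ↦ by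
      simpa [hi] using avgPrime_strictMono.lt_iff_lt.mp (hix.trans_lt hlt)
    have hcard := Set.ncard_le_ncard hsub
    rw [Set.ncard_coe_finset, Nat.card_Ico] at hcard
    omega
  · intro hle
    have hsub : (Finset.Icc 1 m : Set ℕ) ⊆ {i : ℕ | 1 ≤ i ∧ avgPrime i ≤ x} := fun i hi ↦ by
      rw [Finset.coe_Icc] at hi
      exact ⟨hi.1, (avgPrime_strictMono.monotone hi.2).trans hle⟩
    simpa only [Set.ncard_coe_finset, Nat.card_Icc, Nat.add_sub_cancel] using
      Set.ncard_le_ncard hsub (finite_setOf_avgPrime_le x)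

lemma avgPrimeCount_add_le {x y : ℝ} {k e : ℕ} (he : avgPrime (e + 1) ≤ x)
    (hx : e * (x + k) + 1 < 2 ^ e) (hy : x + k * e ≤ y) :
    avgPrimeCount x + k ≤ avgPrimeCount y := by
  have hx₀ : 0 ≤ x := ((Nat.cast_nonneg _).trans (natCast_le_avgPrime _)).trans he
  have hy₀ : 0 ≤ y := hx₀.trans ((le_add_of_nonneg_right (by positivity)).trans hy)
  set m := avgPrimeCount x
  have hem : e < m := (le_avgPrimeCount_iff hx₀).mpr he
  have hmx : avgPrime m ≤ x := (le_avgPrimeCount_iff hx₀).mp le_rfl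
  have hstep : ∀ j ≤ k, avgPrime (m + j) ≤ x + j * e := by
    intro j
    induction j with
    | zero => intro _; simpa using hmx
    | succ j ih =>
      intro hj
      have hindex : (m + j + 1 : ℝ) ≤ x + k := by
        have : (j + 1 : ℝ) ≤ k := mod_cast hj
        linarith [natCast_le_avgPrime m]
      have hpow : (e * (m + j + 1) + 1 : ℝ) < 2 ^ e := lt_of_le_of_lt (by gcongr) hx
      have hgap := avgPrime_add_one_le (i := m + j) (by omega) (mod_cast hpow)
      push_cast
      rw [← add_assoc m j 1]
      linarith [ih (by omega)]
  exact (le_avgPrimeCount_iff hy₀).mpr ((hstep k le_rfl).trans hy)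

lemma log_lt_of_lt_pow {x : ℝ} (hx : 0 < x) {k : ℕ} (h : x < (27 / 10) ^ k) : log x < k := by
  rw [log_lt_iff_lt_exp hx, ← exp_one_pow]
  refine h.trans_le ?_
  gcongr
  linarith [exp_one_gt_d9]

lemma five_mul_add_two_lt_two_pow {s : ℕ} (hs : 5 ≤ s) : 5 * s + 2 < 2 ^ s := by
  induction s, hs using Nat.le_induction with
  | base => norm_num
  | succ s _ ih => rw [pow_succ]; omega

lemma mul_five_mul_add_two_le_two_pow {s : ℕ} (hs : 6 ≤ s) : s * (5 * s + 2) ≤ 2 ^ (s + 2) := by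
  induction s, hs using Nat.le_induction with
  | base => norm_num
  | succ s _ ih => rw [pow_succ]; nlinarith

lemma two_pow_add_two_le_pow {s : ℕ} (hs : 5 ≤ s) : (2 : ℝ) ^ (s + 2) ≤ (27 / 10) ^ s := by
  induction s, hs using Nat.le_induction with
  | base => norm_num
  | succ s _ ih =>
    rw [pow_succ (27 / 10 : ℝ), show s + 1 + 2 = s + 2 + 1 by ring, pow_succ (2 : ℝ)]
    gcongr
    norm_num

lemma avgPrime_sq_lt_of_lt_two_pow {n s : ℕ} (hs : 5 ≤ s) (hn : n < 2 ^ (s + 2)) :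
    avgPrime n ^ 2 < 2 ^ (4 * s + 2) := by
  have hq := five_mul_add_two_lt_two_pow hs
  have hcheb : (2 * s + 1) * (n + 1) + 1 < 2 ^ (2 * s + 1) := by
    rw [pow_add] at hn
    rw [pow_succ, mul_comm 2 s, pow_mul]
    nlinarith
  have hprime : (nth Nat.Prime n : ℝ) ≤ 2 ^ (2 * s + 1) := mod_cast nth_prime_le_two_pow hcheb
  have hnonneg : 0 ≤ avgPrime n := n.cast_nonneg.trans (natCast_le_avgPrime n)
  calc
    avgPrime n ^ 2 < (2 ^ (2 * s + 1)) ^ 2 := by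
      gcongr
      exact (avgPrime_lt_nth_prime n).trans_le hprime
    _ = 2 ^ (4 * s + 2) := by rw [← pow_mul]; ring_nf

lemma mul_two_pow_add_lt_two_pow {s : ℕ} (hs : 5 ≤ s) :
    (5 * s + 2) * (2 ^ (4 * s + 2) + s) + 1 < 2 ^ (5 * s + 2) := by
  have hq := five_mul_add_two_lt_two_pow hs
  have hsq : (5 * s + 2) * s + 1 < 2 ^ (4 * s + 2) := by
    calc
      (5 * s + 2) * s + 1 < 2 ^ s * 2 ^ s := by nlinarith
      _ = 2 ^ (s + s) := (pow_add 2 s s).symm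
      _ ≤ 2 ^ (4 * s + 2) := Nat.pow_le_pow_right two_pos (by omega)
  calc
    (5 * s + 2) * (2 ^ (4 * s + 2) + s) + 1
    _ < (5 * s + 2 + 1) * 2 ^ (4 * s + 2) := by linarith
    _ ≤ 2 ^ s * 2 ^ (4 * s + 2) := by gcongr; exact hq
    _ = 2 ^ (5 * s + 2) := by rw [← pow_add]; ring_nf

lemma avgPrimeCount_sq_add_le_of_lt_two_pow {n s : ℕ} (hs : 5 ≤ s)
    (hsize : s * (5 * s + 2) ≤ 2 * n) (hn : n < 2 ^ (s + 2)) :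
    avgPrimeCount (avgPrime n ^ 2) + s ≤ avgPrimeCount (avgPrime (n + 1) ^ 2) := by
  have hindex : 5 * s + 2 + 1 ≤ n := by nlinarith
  -- `p̄_n ^ 2 < 2 ^ (4 * s + 2)`, and primes with index up to there are below `2 ^ (5 * s + 2)`.
  refine avgPrimeCount_add_le (e := 5 * s + 2) ?_ ?_ ?_
  · have hone : 1 ≤ avgPrime n := le_trans (mod_cast by omega) (natCast_le_avgPrime n)
    exact (avgPrime_strictMono.monotone hindex).trans (le_self_pow₀ hone two_ne_zero)
  · have hsq := avgPrime_sq_lt_of_lt_two_pow hs hn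
    calc
      ((5 * s + 2 : ℕ) * (avgPrime n ^ 2 + s) + 1 : ℝ)
      _ ≤ (5 * s + 2 : ℕ) * (2 ^ (4 * s + 2) + s) + 1 := by gcongr
      _ < 2 ^ (5 * s + 2) := mod_cast mul_two_pow_add_lt_two_pow hs
  · have hsize' : (s * (5 * s + 2 : ℕ) : ℝ) ≤ 2 * n := mod_cast hsize
    linarith [two_mul_le_avgPrime_sq_sub (n := n) (by omega)]

lemma exists_log_lt_avgPrimeCount_sq_of_ge {n : ℕ} (hn : 68 ≤ n) :
    ∃ k : ℕ, log n < k ∧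
      avgPrimeCount (avgPrime n ^ 2) + k ≤ avgPrimeCount (avgPrime (n + 1) ^ 2) := by
  have hlog : 6 ≤ Nat.log 2 n := Nat.le_log_of_pow_le one_lt_two (by omega)
  obtain ⟨s, hs⟩ : ∃ s, Nat.log 2 n = s + 1 := ⟨Nat.log 2 n - 1, by omega⟩
  have hs₅ : 5 ≤ s := by omega
  have hlower : 2 ^ (s + 1) ≤ n := hs ▸ Nat.pow_log_le_self 2 (by omega)
  have hupper : n < 2 ^ (s + 2) := by
    simpa only [hs] using Nat.lt_pow_succ_log_self one_lt_two n
  have hsize : s * (5 * s + 2) ≤ 2 * n := by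
    rcases hs₅.eq_or_lt with rfl | hs₆
    · omega
    · have := mul_five_mul_add_two_le_two_pow hs₆
      rw [pow_succ] at this
      omega
  have hupper' : (n : ℝ) < 2 ^ (s + 2) := mod_cast hupper
  exact ⟨s, log_lt_of_lt_pow (by positivity) (hupper'.trans_le (two_pow_add_two_le_pow hs₅)),
    avgPrimeCount_sq_add_le_of_lt_two_pow hs₅ hsize hupper⟩

/-- The first 68 primes, enough to evaluate `avgPrime n` for `n ≤ 68`. -/
def firstPrimes : List ℕ :=
  [2, 3, 5, 7, 11, 13, 17, 19, 23, 29, 31, 37, 41, 43, 47, 53, 59, 61, 67, 71, 73, 79, 83, 89,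
   97, 101, 103, 107, 109, 113, 127, 131, 137, 139, 149, 151, 157, 163, 167, 173, 179, 181,
   191, 193, 197, 199, 211, 223, 227, 229, 233, 239, 241, 251, 257, 263, 269, 271, 277, 281,
   283, 293, 307, 311, 313, 317, 331, 337]

/-- The value of `avgPrime n` read off from `firstPrimes`, for `n ≤ 68`. It is rational, so that
inequalities between averaged primes become decidable. -/
def tabulatedAvg (n : ℕ) : ℚ := (∑ i ∈ range n, firstPrimes.getD i 0 : ℕ) / n

lemma prime_and_count_firstPrimes :
    ∀ i < 68, (firstPrimes.getD i 0).Prime ∧ Nat.count Nat.Prime (firstPrimes.getD i 0) = i := by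
  decide +kernel

lemma nth_prime_eq_firstPrimes {i : ℕ} (hi : i < 68) :
    nth Nat.Prime i = firstPrimes.getD i 0 := by
  obtain ⟨hprime, hcount⟩ := prime_and_count_firstPrimes i hi
  simpa only [hcount] using Nat.nth_count hprime

lemma avgPrime_eq_tabulatedAvg {n : ℕ} (hn : n ≤ 68) : avgPrime n = tabulatedAvg n := by
  have hsum : ∑ i ∈ range n, nth Nat.Prime i = ∑ i ∈ range n, firstPrimes.getD i 0 :=
    Finset.sum_congr rfl fun i hi ↦
      nth_prime_eq_firstPrimes ((Finset.mem_range.mp hi).trans_le hn)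
  rw [avgPrime_eq_sum_range_div, tabulatedAvg, ← hsum]
  push_cast
  rfl

lemma exists_tabulatedAvg_between_sq_of_mem_Ico_one_six :
    ∀ n ∈ Finset.Ico (1 : ℕ) 6, ∃ k < (3 : ℕ), ∃ m < (20 : ℕ), (n : ℚ) < (27 / 10) ^ k ∧
      tabulatedAvg n ^ 2 < tabulatedAvg (m + 1) ∧
      tabulatedAvg (m + k) ≤ tabulatedAvg (n + 1) ^ 2 := by
  decide +kernel

lemma exists_tabulatedAvg_gap_bound_of_mem_Ico_six_sixtyEight :
    ∀ n ∈ Finset.Ico (6 : ℕ) 68, ∃ k < (6 : ℕ), ∃ e < (20 : ℕ), (n : ℚ) < (27 / 10) ^ k ∧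
      tabulatedAvg (e + 1) ≤ tabulatedAvg n ^ 2 ∧
      e * (tabulatedAvg n ^ 2 + k) + 1 < 2 ^ e ∧
      tabulatedAvg n ^ 2 + k * e ≤ tabulatedAvg (n + 1) ^ 2 := by
  decide +kernel

lemma exists_log_lt_avgPrimeCount_sq_of_mem_Ico_one_six {n : ℕ}
    (hn : n ∈ Finset.Ico 1 6) :
    ∃ k : ℕ, log n < k ∧
      avgPrimeCount (avgPrime n ^ 2) + k ≤ avgPrimeCount (avgPrime (n + 1) ^ 2) := by
  obtain ⟨hn₁, hn₆⟩ := Finset.mem_Ico.mp hn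
  obtain ⟨k, hk, m, hm, hlog, hlt, hle⟩ :=
    exists_tabulatedAvg_between_sq_of_mem_Ico_one_six n hn
  have hlog' : (n : ℝ) < (27 / 10) ^ k := by simpa using (Rat.cast_lt (K := ℝ)).mpr hlog
  refine ⟨k, log_lt_of_lt_pow (by positivity) hlog', ?_⟩
  have hlower : avgPrimeCount (avgPrime n ^ 2) ≤ m := by
    rw [← not_lt, ← Nat.add_one_le_iff, le_avgPrimeCount_iff (sq_nonneg _), not_le,
      avgPrime_eq_tabulatedAvg (by omega), avgPrime_eq_tabulatedAvg (by omega)]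
    exact_mod_cast hlt
  have hupper : m + k ≤ avgPrimeCount (avgPrime (n + 1) ^ 2) := by
    rw [le_avgPrimeCount_iff (sq_nonneg _),
      avgPrime_eq_tabulatedAvg (by omega), avgPrime_eq_tabulatedAvg (by omega)]
    exact_mod_cast hle
  omega

lemma exists_log_lt_avgPrimeCount_sq_of_mem_Ico_six_sixtyEight {n : ℕ}
    (hn : n ∈ Finset.Ico 6 68) :
    ∃ k : ℕ, log n < k ∧
      avgPrimeCount (avgPrime n ^ 2) + k ≤ avgPrimeCount (avgPrime (n + 1) ^ 2) := by
  obtain ⟨hn₆, hn₆₈⟩ := Finset.mem_Ico.mp hn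
  obtain ⟨k, -, e, he, hlog, hindex, hcheb, hdiff⟩ :=
    exists_tabulatedAvg_gap_bound_of_mem_Ico_six_sixtyEight n hn
  have hlog' : (n : ℝ) < (27 / 10) ^ k := by simpa using (Rat.cast_lt (K := ℝ)).mpr hlog
  refine ⟨k, log_lt_of_lt_pow (by positivity) hlog', ?_⟩
  rw [avgPrime_eq_tabulatedAvg (by omega), avgPrime_eq_tabulatedAvg (by omega)]
  refine avgPrimeCount_add_le (e := e) ?_ (mod_cast hcheb) (mod_cast hdiff)
  rw [avgPrime_eq_tabulatedAvg (by omega)]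
  exact_mod_cast hindex

theorem stmt14 (n : ℕ) (hn : 1 ≤ n) :
    (avgPrimeCount (avgPrime (n + 1) ^ 2) : ℝ) - (avgPrimeCount (avgPrime n ^ 2) : ℝ) >
      Real.log n := by
  obtain ⟨k, hlog, hcount⟩ : ∃ k : ℕ, log n < k ∧
      avgPrimeCount (avgPrime n ^ 2) + k ≤ avgPrimeCount (avgPrime (n + 1) ^ 2) := by
    rcases lt_or_ge n 6 with hsmall | hmid
    · exact exists_log_lt_avgPrimeCount_sq_of_mem_Ico_one_six
        (Finset.mem_Ico.mpr ⟨hn, hsmall⟩)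
    rcases lt_or_ge n 68 with hmid' | hlarge
    · exact exists_log_lt_avgPrimeCount_sq_of_mem_Ico_six_sixtyEight
        (Finset.mem_Ico.mpr ⟨hmid, hmid'⟩)
    · exact exists_log_lt_avgPrimeCount_sq_of_ge hlarge
  have hcount' : (avgPrimeCount (avgPrime n ^ 2) + k : ℝ) ≤
      avgPrimeCount (avgPrime (n + 1) ^ 2) := mod_cast hcount
  linarith
end
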